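/- For every real number y with |y| ≥ 100, the derivative of W̄ satisfies the sharper two-sided bound (1/4)·⟨y⟩^{−2/3} ≤ |W̄'(y)| ≤ (7/20)·⟨y⟩^{−2/3}. -/

import Mathlib

/-- The stable self-similar Burgers profile `W̄`. -/
noncomputable def Wbar (y : ℝ) : ℝ :=
  (-y / 2 + Real.sqrt (1 / 27 + y ^ 2 / 4)) ^ ((1 : ℝ) / 3) -
  (y / 2 + Real.sqrt (1 / 27 + y ^ 2 / 4)) ^ ((1 : ℝ) / 3)

/-!
The profile is Cardano's solution of `W̄³ + W̄ = -y`, so `W̄' = -1 / (1 + 3 W̄²)`. Squaring the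
cubic and adding one gives `W̄² (1 + W̄²)² + 1 = T³` with `T = ⟨y⟩^{2/3}`. Comparing cubes turns
this into `1 + 3 W̄² ≤ 4 T` and, for large `T`, into `(20/7) T ≤ 1 + 3 W̄²`.
-/

theorem rpow_one_third_pow_three {x : ℝ} (hx : 0 ≤ x) : (x ^ ((1 : ℝ) / 3)) ^ 3 = x := by
  simpa using Real.rpow_inv_natCast_pow hx three_ne_zero

theorem sqrt_rpow_two_thirds_pow_three {x : ℝ} (hx : 0 ≤ x) :
    (√x ^ ((2 : ℝ) / 3)) ^ 3 = x := by
  rw [← Real.rpow_mul_natCast (Real.sqrt_nonneg x)]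
  norm_num [Real.sq_sqrt hx]

theorem cardano_depressed_cubic {a b r : ℝ} (ha : 0 ≤ a) (hr : 0 ≤ r)
    (h : r ^ 2 = b ^ 2 + a ^ 3) :
    ((-b + r) ^ ((1 : ℝ) / 3) - (b + r) ^ ((1 : ℝ) / 3)) ^ 3 +
      3 * a * ((-b + r) ^ ((1 : ℝ) / 3) - (b + r) ^ ((1 : ℝ) / 3)) = -(2 * b) := by
  have hbr : |b| ≤ r := abs_le_of_sq_le_sq (h ▸ le_add_of_nonneg_right (pow_nonneg ha 3)) hr
  have hp : 0 ≤ -b + r := by linarith [le_abs_self b]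
  have hq : 0 ≤ b + r := by linarith [neg_abs_le b]
  have hp_cube := rpow_one_third_pow_three hp
  have hq_cube := rpow_one_third_pow_three hq
  set p := (-b + r) ^ ((1 : ℝ) / 3)
  set q := (b + r) ^ ((1 : ℝ) / 3)
  have hpq : p * q = a := by
    have hpq_cube : (p * q) ^ 3 = a ^ 3 := by
      rw [mul_pow, hp_cube, hq_cube]
      linear_combination h
    exact (by decide : Odd 3).strictMono_pow.injective hpq_cube
  linear_combination hp_cube - hq_cube - 3 * (p - q) * hpq

theorem Wbar_cubic (y : ℝ) : Wbar y ^ 3 + Wbar y = -y := by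
  have hsq : √(1 / 27 + y ^ 2 / 4) ^ 2 = (y / 2) ^ 2 + (1 / 3) ^ 3 := by
    rw [Real.sq_sqrt (by positivity)]
    ring
  have hcubic := cardano_depressed_cubic (by norm_num) (Real.sqrt_nonneg _) hsq
  rw [← neg_div, ← Wbar] at hcubic
  linear_combination hcubic

theorem continuous_Wbar : Continuous Wbar := by
  unfold Wbar
  exact (Continuous.rpow_const (by fun_prop) fun _ => Or.inr (by norm_num)).sub
    (Continuous.rpow_const (by fun_prop) fun _ => Or.inr (by norm_num))

theorem hasDerivAt_Wbar (y : ℝ) : HasDerivAt Wbar (-(1 + 3 * Wbar y ^ 2))⁻¹ y := by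
  have hinv : HasDerivAt (fun w : ℝ => -(w + w ^ 3)) (-(1 + 3 * Wbar y ^ 2)) (Wbar y) := by
    simpa using ((hasDerivAt_id' (Wbar y)).fun_add (hasDerivAt_pow 3 (Wbar y))).fun_neg
  refine hinv.of_local_left_inverse continuous_Wbar.continuousAt
    (neg_ne_zero.2 (by positivity)) (.of_forall fun x => ?_)
  linear_combination -Wbar_cubic x

theorem abs_deriv_Wbar (y : ℝ) : |deriv Wbar y| = (1 + 3 * Wbar y ^ 2)⁻¹ := by
  rw [(hasDerivAt_Wbar y).deriv, abs_inv, abs_neg, abs_of_pos (by positivity)]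

theorem one_add_three_mul_le_of_cubic {s t : ℝ} (hs : 0 ≤ s)
    (h : s * (1 + s) ^ 2 + 1 = t ^ 3) : 1 + 3 * s ≤ 4 * t := by
  have h_odd : Odd 3 := by decide
  have ht : 1 ≤ t := by
    rw [← h_odd.pow_le_pow, ← h, one_pow]
    exact le_add_of_nonneg_left (by positivity)
  have hst : s ≤ t := by
    rw [← h_odd.pow_le_pow, ← h]
    linarith [sq_nonneg s]
  linarith

theorem le_one_add_three_mul_of_cubic {s t : ℝ} (ht : 325 ≤ t ^ 3)
    (h : s * (1 + s) ^ 2 + 1 = t ^ 3) : 20 / 7 * t ≤ 1 + 3 * s := by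
  have ht_lower : 48 / 7 ≤ t := by
    rw [← (by decide : Odd 3).pow_le_pow]
    exact le_trans (by norm_num) ht
  have hs : 0 < s := pos_of_mul_pos_left (by linarith) (sq_nonneg (1 + s))
  by_contra! hlt
  have hs_lt : s < (20 * t - 7) / 21 := by linarith
  have hcube_lt : s * (1 + s) ^ 2 <
      (20 * t - 7) / 21 * (1 + (20 * t - 7) / 21) ^ 2 := by
    gcongr
  -- Clearing denominators in `hcube_lt` leaves `1261 * t ^ 3 < 8400 * t ^ 2 + 7889`.
  have hgap : (1261 * (48 / 7) - 8400) * (48 / 7) ^ 2 ≤ (1261 * t - 8400) * t ^ 2 := by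
    gcongr
    linarith
  linarith

theorem Wbar_sq_cubic (y : ℝ) :
    Wbar y ^ 2 * (1 + Wbar y ^ 2) ^ 2 + 1 = (√(1 + y ^ 2) ^ ((2 : ℝ) / 3)) ^ 3 := by
  rw [sqrt_rpow_two_thirds_pow_three (by positivity)]
  linear_combination (Wbar y ^ 3 + Wbar y - y) * Wbar_cubic y

theorem Wbar_deriv_sharp_bound_general (y : ℝ) :
    (1 / 4) * √(1 + y ^ 2) ^ (-(2 : ℝ) / 3) ≤ |deriv Wbar y| ∧
    (18 ≤ |y| → |deriv Wbar y| ≤ (7 / 20) * √(1 + y ^ 2) ^ (-(2 : ℝ) / 3)) := by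
  have hcubic := Wbar_sq_cubic y
  have ht_cube := sqrt_rpow_two_thirds_pow_three (x := 1 + y ^ 2) (by positivity)
  have ht_pos : 0 < √(1 + y ^ 2) ^ ((2 : ℝ) / 3) := by positivity
  rw [abs_deriv_Wbar, neg_div, Real.rpow_neg (Real.sqrt_nonneg _)]
  set t := √(1 + y ^ 2) ^ ((2 : ℝ) / 3)
  constructor
  · calc 1 / 4 * t⁻¹ = (4 * t)⁻¹ := by ring
      _ ≤ (1 + 3 * Wbar y ^ 2)⁻¹ := by
        gcongr
        exact one_add_three_mul_le_of_cubic (sq_nonneg _) hcubic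
  · intro hy
    have ht : 325 ≤ t ^ 3 := by
      rw [ht_cube, ← sq_abs]
      nlinarith
    calc (1 + 3 * Wbar y ^ 2)⁻¹ ≤ (20 / 7 * t)⁻¹ := by
          gcongr
          exact le_one_add_three_mul_of_cubic ht hcubic
      _ = 7 / 20 * t⁻¹ := by ring

/-- Sharper two-sided bound on `W̄'` for `|y| ≥ 100`:
`(1/4) ⟨y⟩^{−2/3} ≤ |W̄'(y)| ≤ (7/20) ⟨y⟩^{−2/3}`. -/
theorem Wbar_deriv_sharp_bound (y : ℝ) (hy : 100 ≤ |y|) :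
    (1 / 4) * Real.sqrt (1 + y ^ 2) ^ (-(2 : ℝ) / 3) ≤ |deriv Wbar y| ∧
    |deriv Wbar y| ≤ (7 / 20) * Real.sqrt (1 + y ^ 2) ^ (-(2 : ℝ) / 3) :=
  (Wbar_deriv_sharp_bound_general y).imp_right fun h => h (by linarith)
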